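/- Let ℋ be an infinite-dimensional complex Hilbert space and A ∈ B(ℋ). Let 𝒮 be any set of finite-rank operators on ℋ containing {2e^{iξ}‖A‖P : ξ ∈ [0,2π), P a finite-rank orthogonal projection on ℋ}. Then Ω_∞(A) = ⋂_{k ≥ 1} Ω_k(A) = ⋂{Cl(W(A+F)) : F ∈ 𝒮} = W_e(A), where Cl denotes closure. -/

import Mathlib

noncomputable section

open scoped InnerProductSpace
open Complex

variable {H : Type*} [NormedAddCommGroup H] [InnerProductSpace ℂ H] [CompleteSpace H]

/-- `P` is an orthogonal projection: self-adjoint and idempotent. -/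
def IsOrthProj (P : H →L[ℂ] H) : Prop :=
  IsSelfAdjoint P ∧ P ∘L P = P

/-- The rank of a bounded operator, as a cardinal. -/
def opRank (F : H →L[ℂ] H) : Cardinal :=
  Module.rank ℂ (LinearMap.range (F : H →ₗ[ℂ] H))

/-- The rank-`k` numerical range `Λ_k(A)`. -/
def rankKRange (k : ℕ) (A : H →L[ℂ] H) : Set ℂ :=
  { lam | ∃ P : H →L[ℂ] H, IsOrthProj P ∧ opRank P = k ∧ P ∘L A ∘L P = lam • P }

/-- The classical numerical range `W(A)`. -/
def numRange (A : H →L[ℂ] H) : Set ℂ :=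
  { z | ∃ x : H, ‖x‖ = 1 ∧ ⟪x, A x⟫_ℂ = z }

/-- `λ_k(T)`: the supremum over `k`-dimensional compressions of the `k`-th largest
eigenvalue of the compression (Courant–Fischer form: sup over `k`-dimensional
subspaces of the infimum of the Rayleigh quotient). -/
def lambdaSA (k : ℕ) (T : H →L[ℂ] H) : ℝ :=
  sSup { t : ℝ | ∃ V : Submodule ℂ H, Module.finrank ℂ V = k ∧
    ∀ x ∈ V, ‖x‖ = 1 → t ≤ (⟪x, T x⟫_ℂ).re }

/-- The real part `(T + T*)/2` of an operator. -/
def reOp (T : H →L[ℂ] H) : H →L[ℂ] H :=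
  (2 : ℂ)⁻¹ • (T + ContinuousLinearMap.adjoint T)

/-- The set `Ω_k(A)`. -/
def omegaK (k : ℕ) (A : H →L[ℂ] H) : Set ℂ :=
  { μ | ∀ ξ ∈ Set.Ico (0 : ℝ) (2 * Real.pi),
      (Complex.exp (ξ * Complex.I) * μ).re ≤ lambdaSA k (reOp (Complex.exp (ξ * Complex.I) • A)) }


/-- The set `Ω_∞(A)`. -/
def omegaInf (A : H →L[ℂ] H) : Set ℂ :=
  { μ | ∀ ξ ∈ Set.Ico (0 : ℝ) (2 * Real.pi), ∀ k : ℕ, 1 ≤ k →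
      (Complex.exp (ξ * Complex.I) * μ).re ≤
        lambdaSA k (reOp (Complex.exp (ξ * Complex.I) • A)) }

/-- The essential numerical range `W_e(A)`. -/
def essNumRange (A : H →L[ℂ] H) : Set ℂ :=
  ⋂ F ∈ {F : H →L[ℂ] H | opRank F < Cardinal.aleph0}, closure (numRange (A + F))

lemma numRange_aux (T : H →L[ℂ] H) (x y : H) (hx : ‖x‖ = 1) (hy : ‖y‖ = 1)
    (hTx : ⟪x, T x⟫_ℂ = 0) (hTy : ⟪y, T y⟫_ℂ = 1) (t : ℝ) (ht0 : 0 ≤ t) (ht1 : t ≤ 1) :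
    (t : ℂ) ∈ numRange T := by
  obtain ⟨θ, hθ, him⟩ : ∃ θ : ℂ, ‖θ‖ = 1 ∧
      (θ * ⟪x, T y⟫_ℂ + (starRingEnd ℂ) θ * ⟪y, T x⟫_ℂ).im = 0 := by
    set p := ⟪x, T y⟫_ℂ
    set q := ⟪y, T x⟫_ℂ
    by_cases hc : p - (starRingEnd ℂ) q = 0
    · refine ⟨1, by simp, ?_⟩
      have : p = (starRingEnd ℂ) q := sub_eq_zero.mp hc
      rw [this]
      simp
    · refine ⟨(starRingEnd ℂ) (p - (starRingEnd ℂ) q) / ‖p - (starRingEnd ℂ) q‖, ?_, ?_⟩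
      · have : ‖p - (starRingEnd ℂ) q‖ ≠ 0 := norm_ne_zero_iff.mpr hc
        rw [norm_div, RCLike.norm_conj]
        simp [this]
      · set r := ‖p - (starRingEnd ℂ) q‖
        rw [map_div₀, Complex.conj_ofReal, div_mul_eq_mul_div, div_mul_eq_mul_div, ← add_div,
          Complex.div_ofReal_im]
        simp
        left
        ring
  set w := θ • y with hw
  have hwn : ‖w‖ = 1 := by rw [hw, norm_smul, hθ, hy, one_mul]
  have hθθ : (starRingEnd ℂ) θ * θ = 1 := by
    rw [← Complex.normSq_eq_conj_mul_self, Complex.normSq_eq_norm_sq, hθ]; simp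
  have hTw : ⟪w, T w⟫_ℂ = 1 := by
    rw [hw, map_smul, inner_smul_left, inner_smul_right, hTy, mul_one, hθθ]
  have hcross : (⟪x, T w⟫_ℂ + ⟪w, T x⟫_ℂ).im = 0 := by
    rw [hw, map_smul, inner_smul_left, inner_smul_right]; exact him
  let z : ℝ → H := fun s => ((1 - s : ℝ) : ℂ) • x + (s : ℂ) • w
  have hz : Continuous z := by fun_prop
  have hexp : ∀ s, ⟪z s, T (z s)⟫_ℂ =
      (((1 - s) * s : ℝ) : ℂ) * (⟪x, T w⟫_ℂ + ⟪w, T x⟫_ℂ) + ((s * s : ℝ) : ℂ) := by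
    intro s
    simp only [z, map_add, map_smul, inner_add_left, inner_add_right, inner_smul_left,
      inner_smul_right, hTx, hTw, Complex.conj_ofReal]
    push_cast
    ring
  let g : ℝ → ℝ := fun s => (⟪z s, T (z s)⟫_ℂ).re - t * ‖z s‖ ^ 2
  have hg : Continuous g := by
    have : Continuous fun s => ⟪z s, T (z s)⟫_ℂ := hz.inner (T.continuous.comp hz)
    exact (Complex.continuous_re.comp this).sub (continuous_const.mul (hz.norm.pow 2))
  have hg0 : g 0 ≤ 0 := by
    simp [g, z, hTx, hx, ht0]
  have hg1 : 0 ≤ g 1 := by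
    simp [g, z, hTw, hwn, ht1]
  obtain ⟨s, hs, hgs⟩ := intermediate_value_Icc (zero_le_one' ℝ) hg.continuousOn ⟨hg0, hg1⟩
  have hval : ⟪z s, T (z s)⟫_ℂ = ((t * ‖z s‖ ^ 2 : ℝ) : ℂ) := by
    apply Complex.ext
    · rw [Complex.ofReal_re]; simp only [g] at hgs; linarith
    · rw [hexp, Complex.add_im, Complex.im_ofReal_mul, hcross, Complex.ofReal_im,
        Complex.ofReal_im]; simp
  have hne : z s ≠ 0 := by
    intro h0
    have h1 : ((1 - s : ℝ) : ℂ) • x = -((s : ℂ) • w) := eq_neg_of_add_eq_zero_left h0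
    have h2 := congrArg norm h1
    rw [norm_neg, norm_smul, norm_smul, hx, hwn, Complex.norm_real, Complex.norm_real,
      Real.norm_of_nonneg (by linarith [hs.2]), Real.norm_of_nonneg hs.1] at h2
    have h3 : s = 1 / 2 := by linarith
    have h4 := hexp s
    have h5 : x = -w := by
      have : (1 - s : ℝ) = s := by linarith
      rw [this, ← smul_neg] at h1
      exact smul_right_injective H (r := (s : ℂ)) (by rw [h3]; norm_num) h1
    rw [h5, map_neg, inner_neg_neg, hTw] at hTx
    exact one_ne_zero hTx
  have hn : (‖z s‖ : ℂ) ≠ 0 := by exact_mod_cast norm_ne_zero_iff.mpr hne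
  refine ⟨((‖z s‖ : ℂ)⁻¹) • z s, ?_, ?_⟩
  · rw [norm_smul, norm_inv, Complex.norm_real, norm_norm,
      inv_mul_cancel₀ (norm_ne_zero_iff.mpr hne)]
  · rw [map_smul, inner_smul_left, inner_smul_right, hval, ← Complex.ofReal_inv,
      Complex.conj_ofReal]
    push_cast
    field_simp

/-- Toeplitz–Hausdorff. -/
lemma convex_numRange (T : H →L[ℂ] H) : Convex ℝ (numRange T) := by
  rw [convex_iff_add_mem]
  rintro a ⟨x, hx, hxa⟩ b ⟨y, hy, hyb⟩ c d hc hd hcd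
  by_cases hab : a = b
  · subst hab
    rw [← add_smul, hcd, one_smul]
    exact ⟨x, hx, hxa⟩
  have hba : b - a ≠ 0 := sub_ne_zero.mpr (Ne.symm hab)
  have key : ∀ z : H, ‖z‖ = 1 →
      ⟪z, ((b - a)⁻¹ • (T - a • (1 : H →L[ℂ] H))) z⟫_ℂ = (b - a)⁻¹ * (⟪z, T z⟫_ℂ - a) := by
    intro z hz
    have : ⟪z, z⟫_ℂ = 1 := by rw [inner_self_eq_norm_sq_to_K, hz]; simp
    simp [hz]
  obtain ⟨z, hz, hzd⟩ := numRange_aux ((b - a)⁻¹ • (T - a • (1 : H →L[ℂ] H))) x y hx hy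
    (by rw [key x hx, hxa]; simp) (by rw [key y hy, hyb]; exact inv_mul_cancel₀ hba) d hd
    (by linarith)
  refine ⟨z, hz, ?_⟩
  rw [key z hz] at hzd
  have : ⟪z, T z⟫_ℂ = d * (b - a) + a := by
    rw [← hzd]; field_simp; ring
  rw [this, Complex.real_smul, Complex.real_smul]
  have : (c : ℂ) = 1 - d := by rw [← Complex.ofReal_one, ← hcd]; push_cast; ring
  rw [this]; ring

lemma exists_angle (w : ℂ) (hw : ‖w‖ = 1) :
    ∃ ξ ∈ Set.Ico (0 : ℝ) (2 * Real.pi), Complex.exp (ξ * Complex.I) = w := by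
  have h1 : Complex.exp (w.arg * Complex.I) = w := by
    have := Complex.norm_mul_exp_arg_mul_I w
    rwa [hw, Complex.ofReal_one, one_mul] at this
  by_cases h : 0 ≤ w.arg
  · exact ⟨w.arg, ⟨h, by linarith [Complex.arg_le_pi w, Real.pi_pos]⟩, h1⟩
  · refine ⟨w.arg + 2 * Real.pi, ⟨by linarith [Complex.neg_pi_lt_arg w], by linarith⟩, ?_⟩
    push_cast
    rw [add_mul, Complex.exp_add, h1, Complex.exp_two_pi_mul_I, mul_one]

lemma reOp_re (T : H →L[ℂ] H) (x : H) : (⟪x, reOp T x⟫_ℂ).re = (⟪x, T x⟫_ℂ).re := by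
  have h : ⟪x, (ContinuousLinearMap.adjoint T) x⟫_ℂ = (starRingEnd ℂ) ⟪x, T x⟫_ℂ := by
    rw [ContinuousLinearMap.adjoint_inner_right, inner_conj_symm]
  have h2 : ⟪x, reOp T x⟫_ℂ = (2 : ℂ)⁻¹ * (⟪x, T x⟫_ℂ + (starRingEnd ℂ) ⟪x, T x⟫_ℂ) := by
    simp only [reOp, smul_apply, add_apply,
      inner_smul_right, inner_add_right, h]
  rw [h2, Complex.add_conj]
  simp

lemma reOp_selfAdjoint (T : H →L[ℂ] H) : IsSelfAdjoint (reOp T) := by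
  rw [IsSelfAdjoint, reOp, star_smul, star_add, ← ContinuousLinearMap.star_eq_adjoint, star_star,
    add_comm]
  simp

lemma exists_sub_finrank {E : Type*} [AddCommGroup E] [Module ℂ E]
    (hH : ¬ FiniteDimensional ℂ E) (k : ℕ) :
    ∃ V : Submodule ℂ E, Module.finrank ℂ V = k := by
  have h1 : (k : Cardinal) ≤ Module.rank ℂ E := by
    have : Cardinal.aleph0 ≤ Module.rank ℂ E := by
      by_contra h
      exact hH (Module.rank_lt_aleph0_iff.mp (not_le.mp h))
    exact (Cardinal.natCast_lt_aleph0.le).trans this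
  obtain ⟨v, hv⟩ := exists_linearIndependent_of_le_rank h1
  exact ⟨Submodule.span ℂ (Set.range v), by rw [finrank_span_eq_card hv]; simp⟩

lemma re_inner_le (T : H →L[ℂ] H) (x : H) : |(⟪x, T x⟫_ℂ).re| ≤ ‖T‖ * ‖x‖ ^ 2 := by
  calc _ ≤ ‖⟪x, T x⟫_ℂ‖ := Complex.abs_re_le_norm _
    _ ≤ ‖x‖ * ‖T x‖ := norm_inner_le_norm _ _
    _ ≤ ‖x‖ * (‖T‖ * ‖x‖) := by gcongr; exact T.le_opNorm x
    _ = _ := by ring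

lemma exists_unit {V : Submodule ℂ H} {x : H} (hx : x ∈ V) (h0 : x ≠ 0) :
    ∃ c : ℂ, c • x ∈ V ∧ ‖c • x‖ = 1 := by
  refine ⟨(‖x‖ : ℂ)⁻¹, V.smul_mem _ hx, ?_⟩
  rw [norm_smul, norm_inv, Complex.norm_real, norm_norm, inv_mul_cancel₀ (norm_ne_zero_iff.mpr h0)]

lemma lambda_bdd (k : ℕ) (hk : 1 ≤ k) (T : H →L[ℂ] H) :
    BddAbove { t : ℝ | ∃ V : Submodule ℂ H, Module.finrank ℂ V = k ∧
    ∀ x ∈ V, ‖x‖ = 1 → t ≤ (⟪x, T x⟫_ℂ).re } := by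
  refine ⟨‖T‖, ?_⟩
  rintro t ⟨V, hV, ht⟩
  have : V ≠ ⊥ := by rintro rfl; simp at hV; omega
  obtain ⟨x, hx, hx0⟩ := V.exists_mem_ne_zero_of_ne_bot this
  obtain ⟨c, hc, hc1⟩ := exists_unit hx hx0
  have h1 := ht _ hc hc1
  have h2 := re_inner_le T (c • x)
  rw [hc1] at h2
  linarith [(abs_le.mp h2).2]

lemma omegaInf_sub (hH : ¬ FiniteDimensional ℂ H) (A : H →L[ℂ] H) :
    omegaInf A ⊆ essNumRange A := by
  intro μ hμ
  simp only [essNumRange, Set.mem_iInter, Set.mem_setOf_eq]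
  intro F hF
  by_contra hn
  obtain ⟨f, u, hf1, hf2⟩ := RCLike.geometric_hahn_banach_closed_point (𝕜 := ℂ)
    (convex_numRange (A + F)).closure isClosed_closure hn
  set w := f 1 with hw
  have hfz : ∀ z, f z = w * z := by
    intro z
    have : f (z • (1 : ℂ)) = z • f 1 := map_smul f z 1
    rw [smul_eq_mul, mul_one] at this
    rw [this, smul_eq_mul, mul_comm]
  have : FiniteDimensional ℂ (LinearMap.range (F : H →ₗ[ℂ] H)) :=
    Module.rank_lt_aleph0_iff.mp hF
  set k := Module.finrank ℂ (LinearMap.range (F : H →ₗ[ℂ] H)) + 1 with hk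
  have hmeet : ∀ V : Submodule ℂ H, Module.finrank ℂ V = k →
      ∃ x ∈ V, ‖x‖ = 1 ∧ F x = 0 := by
    intro V hV
    have : FiniteDimensional ℂ V := Module.finite_of_finrank_pos (by omega)
    have := LinearMap.ker_ne_bot_of_finrank_lt
      (f := (F : H →ₗ[ℂ] H).rangeRestrict ∘ₗ V.subtype) (by omega)
    obtain ⟨x, hx, hx0⟩ := Submodule.exists_mem_ne_zero_of_ne_bot this
    have hFx : F x = 0 := by
      have := congrArg Subtype.val (LinearMap.mem_ker.mp hx)
      simpa using this
    obtain ⟨c, hc, hc1⟩ := exists_unit x.2 (by simpa using hx0)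
    exact ⟨_, hc, hc1, by rw [map_smul, hFx, smul_zero]⟩
  have hw0 : w ≠ 0 := by
    intro h0
    obtain ⟨V, hV⟩ := exists_sub_finrank hH k
    obtain ⟨x, -, hx, -⟩ := hmeet V hV
    have h1 := hf1 _ (subset_closure ⟨x, hx, rfl⟩)
    rw [hfz, h0, zero_mul] at h1 hf2
    linarith
  have hwp : 0 < ‖w‖ := norm_pos_iff.mpr hw0
  obtain ⟨ξ, hξ, hexp⟩ := exists_angle (w / ‖w‖) (by
    rw [norm_div, Complex.norm_real, norm_norm, div_self hwp.ne'])
  have hre : ∀ z, (Complex.exp (ξ * Complex.I) * z).re = (f z).re / ‖w‖ := by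
    intro z
    rw [hexp, hfz, div_mul_eq_mul_div, Complex.div_ofReal_re]
  have h1 := hμ ξ hξ k (by omega)
  have h2 : lambdaSA k (reOp (Complex.exp (ξ * Complex.I) • A)) ≤ u / ‖w‖ := by
    apply csSup_le
    · obtain ⟨V, hV⟩ := exists_sub_finrank hH k
      refine ⟨-‖reOp (Complex.exp (ξ * Complex.I) • A)‖, V, hV, fun x _ hx => ?_⟩
      have := re_inner_le (reOp (Complex.exp (ξ * Complex.I) • A)) x
      rw [hx] at this
      linarith [(abs_le.mp this).1]
    · rintro t ⟨V, hV, ht⟩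
      obtain ⟨x, hxV, hx, hFx⟩ := hmeet V hV
      refine (ht x hxV hx).trans ?_
      rw [reOp_re, smul_apply, inner_smul_right, hre]
      have h3 := hf1 _ (subset_closure ⟨x, hx, rfl⟩)
      rw [add_apply, hFx, add_zero] at h3
      gcongr
      exact h3.le
  rw [hre] at h1
  have h3 : u / ‖w‖ < (f μ).re / ‖w‖ := by gcongr; exact hf2
  linarith

lemma spectral_aux (T : H →L[ℂ] H) (hT : IsSelfAdjoint T) (k : ℕ) (hk : 1 ≤ k) (c M : ℝ)
    (hM : ∀ x, (⟪x, T x⟫_ℂ).re ≤ M * ‖x‖ ^ 2) (hcM : -M ≤ c) (hc : lambdaSA k T < c) :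
    ∃ P : H →L[ℂ] H, IsOrthProj P ∧ opRank P < Cardinal.aleph0 ∧
      ∀ x, ‖x‖ = 1 → (⟪x, T x⟫_ℂ).re - 2 * M * (⟪x, P x⟫_ℂ).re ≤ c := by
  set B : H →L[ℂ] H := T - (c : ℂ) • 1 with hB
  have hBs : IsSelfAdjoint B := by
    rw [IsSelfAdjoint, hB, star_sub, star_smul, star_one, hT.star_eq]
    simp
  set g := B⁺ with hg
  have hgpos : g.IsPositive :=
    (ContinuousLinearMap.nonneg_iff_isPositive _).mp (CFC.posPart_nonneg B)
  have hnpos : (B⁻).IsPositive :=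
    (ContinuousLinearMap.nonneg_iff_isPositive _).mp (CFC.negPart_nonneg B)
  have hdec : ∀ x, T x = (c : ℂ) • x + g x - B⁻ x := by
    intro x
    have h1 : g - B⁻ = B := CFC.posPart_sub_negPart B hBs
    have h2 := congrArg (fun S : H →L[ℂ] H => S x) h1
    have h3 : g x - B⁻ x = T x - (c : ℂ) • x := h2
    rw [add_sub_assoc, h3]; abel
  have hng : ∀ x, B⁻ (g x) = 0 := by
    intro x
    exact congrArg (fun S : H →L[ℂ] H => S x) (CFC.negPart_mul_posPart B)
  have hself : ∀ x : H, (⟪x, (c : ℂ) • x⟫_ℂ).re = c * ‖x‖ ^ 2 := by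
    intro x
    rw [inner_smul_right, inner_self_eq_norm_sq_to_K, Complex.re_ofReal_mul]
    congr 1
    norm_cast
  set R := LinearMap.range (g : H →ₗ[ℂ] H) with hR
  have hRT : ∀ x ∈ R, c * ‖x‖ ^ 2 ≤ (⟪x, T x⟫_ℂ).re := by
    rintro _ ⟨y, rfl⟩
    have h1 := hgpos.re_inner_nonneg_right (g y)
    simp only [ContinuousLinearMap.coe_coe, RCLike.re_to_complex] at h1 ⊢
    rw [hdec, hng, sub_zero, inner_add_right, Complex.add_re, hself]
    linarith
  have hfin : Module.rank ℂ R < Cardinal.aleph0 := by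
    by_contra hcon
    have h1 : ¬ FiniteDimensional ℂ R := fun h => hcon (Module.rank_lt_aleph0_iff.mpr h)
    obtain ⟨V, hV⟩ := exists_sub_finrank h1 k
    have h2 : c ≤ lambdaSA k T := by
      apply le_csSup (lambda_bdd k hk T)
      refine ⟨V.map R.subtype, ?_, ?_⟩
      · rw [← hV]
        exact (Submodule.equivMapOfInjective R.subtype R.subtype_injective V).finrank_eq.symm
      · rintro x hx hx1
        obtain ⟨y, -, rfl⟩ := hx
        have := hRT _ y.2
        simp only [Submodule.subtype_apply] at hx1 ⊢
        rw [hx1] at this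
        linarith
    linarith
  have : FiniteDimensional ℂ R := Module.rank_lt_aleph0_iff.mp hfin
  refine ⟨R.starProjection, ⟨?_, ?_⟩, ?_, ?_⟩
  · exact isSelfAdjoint_starProjection R
  · exact R.isIdempotentElem_starProjection
  · rw [opRank]
    have : LinearMap.range (R.starProjection : H →ₗ[ℂ] H) = R := Submodule.range_starProjection R
    rw [this]; exact hfin
  · intro x hx
    set p := R.starProjection x with hp
    have hpR : p ∈ R := R.starProjection_apply_mem x
    set v := x - p with hv
    have hvR : v ∈ Rᗮ := R.sub_starProjection_mem_orthogonal x
    have hxpv : x = p + v := by rw [hv]; abel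
    have horth : ∀ r ∈ R, ⟪r, v⟫_ℂ = 0 := fun r hr => hvR r hr
    have horth' : ∀ r ∈ R, ⟪v, r⟫_ℂ = 0 := fun r hr => by
      rw [← inner_conj_symm, horth r hr, map_zero]
    have hTp : T p ∈ R := by
      obtain ⟨y, hy⟩ := hpR
      have hy' : g y = p := hy
      refine ⟨(c : ℂ) • y + g y, ?_⟩
      rw [hdec p, ← hy', hng]
      simp
    have hgv : g v = 0 := by
      have h1 : ⟪g v, g v⟫_ℂ = 0 := by
        have h2 : ⟪g v, g v⟫_ℂ = ⟪v, g (g v)⟫_ℂ := hgpos.isSelfAdjoint.isSymmetric v (g v)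
        rw [h2]
        exact horth' _ ⟨g v, rfl⟩
      exact inner_self_eq_zero.mp h1
    have hTv : (⟪v, T v⟫_ℂ).re ≤ c * ‖v‖ ^ 2 := by
      have h1 := hnpos.re_inner_nonneg_right v
      simp only [RCLike.re_to_complex] at h1
      rw [hdec, hgv, add_zero, inner_sub_right, Complex.sub_re, hself]
      linarith
    have hpTv : ⟪p, T v⟫_ℂ = 0 := by
      have : ⟪T p, v⟫_ℂ = ⟪p, T v⟫_ℂ := hT.isSymmetric p v
      rw [← this]; exact horth _ hTp
    have hxT : ⟪x, T x⟫_ℂ = ⟪p, T p⟫_ℂ + ⟪v, T v⟫_ℂ := by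
      conv_lhs => rw [hxpv]
      rw [map_add, inner_add_left, inner_add_right, inner_add_right, hpTv, horth' _ hTp]
      ring
    have hxp : (⟪x, p⟫_ℂ).re = ‖p‖ ^ 2 := by
      conv_lhs => rw [hxpv]
      rw [inner_add_left, horth' _ hpR, add_zero, inner_self_eq_norm_sq_to_K]
      norm_cast
    have hnorm : ‖p‖ ^ 2 + ‖v‖ ^ 2 = 1 := by
      have := norm_add_sq_eq_norm_sq_add_norm_sq_of_inner_eq_zero p v (horth p hpR)
      rw [← hxpv, hx] at this
      linarith
    have h1 := hM p
    rw [hxT, hxp, Complex.add_re]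
    have h2 := mul_le_mul_of_nonneg_right hcM (sq_nonneg ‖p‖)
    have h3 : c * ‖p‖ ^ 2 + c * ‖v‖ ^ 2 = c := by rw [← mul_add, hnorm, mul_one]
    linarith

lemma inter_sub (hH : ¬ FiniteDimensional ℂ H) (A : H →L[ℂ] H)
    (S : Set (H →L[ℂ] H))
    (hS0 : ∀ ξ ∈ Set.Ico (0 : ℝ) (2 * Real.pi), ∀ P : H →L[ℂ] H,
      IsOrthProj P → opRank P < Cardinal.aleph0 →
      ((2 * Complex.exp (ξ * Complex.I) * (‖A‖ : ℂ)) • P) ∈ S) :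
    (⋂ F ∈ S, closure (numRange (A + F))) ⊆ omegaInf A := by
  intro μ hμ ξ hξ k hk
  simp only [Set.mem_iInter] at hμ
  set e := Complex.exp (ξ * Complex.I) with he
  have hen : ‖e‖ = 1 := Complex.norm_exp_ofReal_mul_I ξ
  have he0 : e ≠ 0 := Complex.exp_ne_zero _
  have hb : ∀ x, |(⟪x, reOp (e • A) x⟫_ℂ).re| ≤ ‖A‖ * ‖x‖ ^ 2 := by
    intro x
    have h := re_inner_le (e • A) x
    rw [norm_smul, hen, one_mul] at h
    rwa [reOp_re]
  refine le_of_forall_gt_imp_ge_of_dense fun c hc => ?_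
  have hlow : -‖A‖ ≤ lambdaSA k (reOp (e • A)) := by
    apply le_csSup (lambda_bdd k hk _)
    obtain ⟨V, hV⟩ := exists_sub_finrank hH k
    refine ⟨V, hV, fun x _ hx => ?_⟩
    have := hb x
    rw [hx] at this
    linarith [(abs_le.mp this).1]
  obtain ⟨P, hP, hPr, hPc⟩ := spectral_aux (reOp (e • A)) (reOp_selfAdjoint _) k hk c ‖A‖
    (fun x => (abs_le.mp (hb x)).2) (hlow.trans hc.le) hc
  obtain ⟨η, hη, hηe⟩ := exists_angle (-e⁻¹) (by rw [norm_neg, norm_inv, hen, inv_one])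
  have h1 := hμ _ (hS0 η hη P hP hPr)
  have hcl : IsClosed {z : ℂ | (e * z).re ≤ c} :=
    isClosed_le (Complex.continuous_re.comp (continuous_const.mul continuous_id)) continuous_const
  refine closure_minimal ?_ hcl h1
  rintro _ ⟨x, hx, rfl⟩
  have h2 := hPc x hx
  rw [reOp_re, smul_apply, inner_smul_right] at h2
  have h3 : e * ⟪x, (A + (2 * Complex.exp (η * Complex.I) * (‖A‖ : ℂ)) • P) x⟫_ℂ
      = e * ⟪x, A x⟫_ℂ - ((2 * ‖A‖ : ℝ) : ℂ) * ⟪x, P x⟫_ℂ := by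
    rw [add_apply, smul_apply, inner_add_right,
      inner_smul_right, hηe]
    push_cast
    field_simp
    ring
  rw [Set.mem_setOf_eq, h3, Complex.sub_re, Complex.re_ofReal_mul]
  exact h2

/-- For `A` on an infinite-dimensional Hilbert space and any collection `𝒮` of
finite-rank operators containing all operators `2e^{iξ}‖A‖P` with `P` a finite-rank
orthogonal projection and `ξ ∈ [0,2π)`:
`Ω_∞(A) = ⋂_{k ≥ 1} Ω_k(A) = ⋂_{F ∈ 𝒮} Cl(W(A+F)) = W_e(A)`. -/
theorem omegaInf_eq_iInter
    (hH : ¬ FiniteDimensional ℂ H) (A : H →L[ℂ] H)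
    (S : Set (H →L[ℂ] H))
    (hSrank : ∀ F ∈ S, opRank F < Cardinal.aleph0)
    (hS0 : ∀ ξ ∈ Set.Ico (0 : ℝ) (2 * Real.pi), ∀ P : H →L[ℂ] H,
      IsOrthProj P → opRank P < Cardinal.aleph0 →
      ((2 * Complex.exp (ξ * Complex.I) * (‖A‖ : ℂ)) • P) ∈ S) :
    (omegaInf A = ⋂ (k : ℕ) (_ : 1 ≤ k), omegaK k A) ∧
    (omegaInf A = ⋂ F ∈ S, closure (numRange (A + F))) ∧
    omegaInf A = essNumRange A := by
  have h1 := omegaInf_sub hH A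
  have h2 : essNumRange A ⊆ ⋂ F ∈ S, closure (numRange (A + F)) := by
    intro μ hμ
    simp only [essNumRange, Set.mem_iInter, Set.mem_setOf_eq] at hμ ⊢
    exact fun F hF => hμ F (hSrank F hF)
  have h3 := inter_sub hH A S hS0
  refine ⟨?_, Set.Subset.antisymm (h1.trans h2) h3, Set.Subset.antisymm h1 (h2.trans h3)⟩
  ext μ
  simp only [omegaInf, omegaK, Set.mem_iInter, Set.mem_setOf_eq]
  exact ⟨fun h k hk ξ hξ => h ξ hξ k hk, fun h k hk ξ hξ => h ξ hξ k hk⟩
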